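/- arXiv:1811.08475 — 2 statements merged into one kernel-verified Lean document; each statement's English description precedes it below -/
import Mathlib

section
/- (Extended Schur complement lemma.) Let A ∈ ℝ^{p×q} and let P' ∈ 𝕊^q be symmetric. The following are equivalent: (1) there exists a symmetric matrix P ∈ 𝕊^p with P ≻ 0 such that Aᵀ·P·A − P' ⪯ 0; (2) there exist a matrix G ∈ ℝ^{p×p} and a symmetric matrix P ∈ 𝕊^p with P ≻ 0 such that the block matrix [[P', Aᵀ·Gᵀ],[G·A, G + Gᵀ − P]] is positive semidefinite. -/
open Matrix

/-!
Compressing the block matrix to the graph of `-A`, that is, conjugating it by `[1; -A]`, cancels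
every term in `G` and leaves `P' - Aᴴ P A`; so the same `P` serves in (1), whatever `G` is.
Conversely, for `G = P` the block matrix is the sum `[1 0]ᴴ (P' - Aᴴ P A) [1 0] + [A 1]ᴴ P [A 1]` of
two positive semidefinite matrices. In particular the equivalence holds for each fixed `P ⪰ 0`.
-/

section BlockIdentities

variable {m n k R : Type*} [Fintype m]

theorem conjTranspose_fromCols_mul_mul_fromCols [Semiring R] [StarRing R]
    (M : Matrix m m R) (B : Matrix m n R) (C : Matrix m k R) :
    (fromCols B C)ᴴ * M * fromCols B C =
      fromBlocks (Bᴴ * M * B) (Bᴴ * M * C) (Cᴴ * M * B) (Cᴴ * M * C) := by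
  rw [conjTranspose_fromCols_eq_fromRows_conjTranspose, fromRows_mul, fromRows_mul_fromCols]

variable [Fintype n] [DecidableEq n] [Ring R] [StarRing R]

theorem conjTranspose_fromRows_one_neg_mul_fromBlocks_mul (A : Matrix m n R) (Q : Matrix n n R)
    (G P : Matrix m m R) :
    (fromRows (1 : Matrix n n R) (-A))ᴴ * fromBlocks Q (Aᴴ * Gᴴ) (G * A) (G + Gᴴ - P) *
      fromRows (1 : Matrix n n R) (-A) = Q - Aᴴ * P * A := by
  rw [conjTranspose_fromRows_eq_fromCols_conjTranspose, fromCols_mul_fromBlocks,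
    fromCols_mul_fromRows]
  simp only [conjTranspose_one, conjTranspose_neg, Matrix.one_mul, Matrix.mul_one,
    Matrix.neg_mul, Matrix.mul_neg, Matrix.mul_add, Matrix.add_mul, Matrix.mul_sub,
    Matrix.sub_mul, Matrix.mul_assoc]
  abel

theorem fromBlocks_eq_conjTranspose_fromCols_mul_mul_add [DecidableEq m] (A : Matrix m n R)
    (Q : Matrix n n R) (P : Matrix m m R) :
    fromBlocks Q (Aᴴ * P) (P * A) P =
      (fromCols (1 : Matrix n n R) (0 : Matrix n m R))ᴴ * (Q - Aᴴ * P * A) *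
          fromCols (1 : Matrix n n R) (0 : Matrix n m R) +
        (fromCols A (1 : Matrix m m R))ᴴ * P * fromCols A (1 : Matrix m m R) := by
  rw [conjTranspose_fromCols_mul_mul_fromCols, conjTranspose_fromCols_mul_mul_fromCols,
    fromBlocks_add]
  simp

end BlockIdentities

section PosSemidef

variable {m n R : Type*} [Fintype m] [Finite n] [Ring R] [PartialOrder R] [StarRing R]
  {A : Matrix m n R} {Q : Matrix n n R} {G P : Matrix m m R}

theorem posSemidef_sub_of_posSemidef_fromBlocks
    (h : (fromBlocks Q (Aᴴ * Gᴴ) (G * A) (G + Gᴴ - P)).PosSemidef) :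
    (Q - Aᴴ * P * A).PosSemidef := by
  classical
  have := Fintype.ofFinite n
  rw [← conjTranspose_fromRows_one_neg_mul_fromBlocks_mul A Q G P]
  exact h.conjTranspose_mul_mul_same _

theorem posSemidef_fromBlocks_of_posSemidef_sub [AddLeftMono R] (hP : P.PosSemidef)
    (h : (Q - Aᴴ * P * A).PosSemidef) : (fromBlocks Q (Aᴴ * P) (P * A) P).PosSemidef := by
  classical
  have := Fintype.ofFinite n
  rw [fromBlocks_eq_conjTranspose_fromCols_mul_mul_add]
  exact (h.conjTranspose_mul_mul_same _).add (hP.conjTranspose_mul_mul_same _)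

theorem stmt7_general [AddLeftMono R] (A : Matrix m n R) (Q : Matrix n n R) (hP : P.PosSemidef) :
    (Q - Aᴴ * P * A).PosSemidef ↔
      ∃ G : Matrix m m R, (fromBlocks Q (Aᴴ * Gᴴ) (G * A) (G + Gᴴ - P)).PosSemidef := by
  refine ⟨fun h ↦ ⟨P, ?_⟩, fun ⟨_, h⟩ ↦ posSemidef_sub_of_posSemidef_fromBlocks h⟩
  rw [hP.isHermitian.eq, add_sub_cancel_right]
  exact posSemidef_fromBlocks_of_posSemidef_sub hP h

end PosSemidef

/-- Extended Schur complement lemma. -/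
theorem stmt7 {p q : ℕ} (A : Matrix (Fin p) (Fin q) ℝ)
    (P' : Matrix (Fin q) (Fin q) ℝ) (hP' : P'.IsSymm) :
    (∃ P : Matrix (Fin p) (Fin p) ℝ, P.PosDef ∧ (P' - Aᵀ * P * A).PosSemidef) ↔
    (∃ (G : Matrix (Fin p) (Fin p) ℝ) (P : Matrix (Fin p) (Fin p) ℝ), P.PosDef ∧
      (Matrix.fromBlocks P' (Aᵀ * Gᵀ) (G * A) (G + Gᵀ - P)).PosSemidef) := by
  rw [exists_comm]
  simp only [exists_and_left]
  exact exists_congr fun P ↦ and_congr_right fun hP ↦ by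
    simpa only [conjTranspose_eq_transpose_of_trivial] using stmt7_general A P' hP.posSemidef
end

section
/- Let A₀ ∈ ℝ^{d×d} and M ∈ 𝕊^d with M ⪰ 0, and define the affine map H(S) := A₀·S·A₀ᵀ + M on symmetric matrices. Suppose S₀ ∈ 𝕊^d satisfies S₀ ⪰ 0 and H(S₀) ⪯ S₀. Then the iterates satisfy 0 ⪯ ⋯ ⪯ H^{k+1}(S₀) ⪯ H^k(S₀) ⪯ ⋯ ⪯ H(S₀) ⪯ S₀ for all k, the sequence (H^k(S₀))_{k∈ℕ} converges to a matrix S̄ satisfying H(S̄) = S̄ and 0 ⪯ S̄ ⪯ S₀, and consequently Tr(Λ·S̄) ≤ Tr(Λ·S₀) for every symmetric Λ ⪰ 0. -/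
open Matrix Filter

/-!
The map `H` is monotone and continuous for the Loewner order, and `0 ≤ H 0`. Since `H S₀ ≤ S₀`,
monotonicity makes the orbit of `S₀` decreasing and bounded below by `0`. For a positive
semidefinite `D = Bᴴ * B` the Frobenius norm satisfies `‖D‖ ≤ ‖B‖ ^ 2 = Tr D`, so Loewner intervals
are compact. As the order is closed, every cluster point of the orbit is its greatest lower bound;
hence the orbit converges, and by continuity its limit is a fixed point.
-/

section OrderedSpace

variable {α ι : Type*} [TopologicalSpace α]

theorem isGLB_range_of_mapClusterPt [Preorder α] [OrderClosedTopology α] [Preorder ι]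
    [IsDirectedOrder ι] [Nonempty ι] {u : ι → α} {x : α} (hu : Antitone u)
    (hx : MapClusterPt x atTop u) : IsGLB (Set.range u) x := by
  constructor
  · rintro _ ⟨i, rfl⟩
    exact isClosed_Iic.mem_of_mapClusterPt hx ((eventually_ge_atTop i).mono fun _ hij ↦ hu hij)
  · intro b hb
    exact isClosed_Ici.mem_of_mapClusterPt hx (.of_forall fun i ↦ hb ⟨i, rfl⟩)

variable [PartialOrder α] [OrderClosedTopology α] [CompactIccSpace α]

theorem exists_tendsto_of_antitone_of_bddBelow [Preorder ι] [IsDirectedOrder ι] [Nonempty ι]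
    {u : ι → α} (hu : Antitone u) (hbdd : BddBelow (Set.range u)) :
    ∃ x, Tendsto u atTop (nhds x) := by
  obtain ⟨b, hb⟩ := hbdd
  obtain ⟨i⟩ := ‹Nonempty ι›
  have hmem : ∀ᶠ j in atTop, u j ∈ Set.Icc b (u i) :=
    (eventually_ge_atTop i).mono fun j hij ↦ ⟨hb ⟨j, rfl⟩, hu hij⟩
  obtain ⟨x, -, hx⟩ := isCompact_Icc.exists_mapClusterPt_of_frequently hmem.frequently
  exact ⟨x, isCompact_Icc.tendsto_nhds_of_unique_mapClusterPt hmem fun y _ hy ↦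
    (isGLB_range_of_mapClusterPt hu hy).unique (isGLB_range_of_mapClusterPt hu hx)⟩

theorem exists_tendsto_iterate_isFixedPt {f : α → α} (hmono : Monotone f) (hcont : Continuous f)
    {a b : α} (ha : a ≤ f a) (hb : f b ≤ b) (hab : a ≤ b) :
    ∃ x ∈ Set.Icc a b, Tendsto (fun k ↦ f^[k] b) atTop (nhds x) ∧ Function.IsFixedPt f x := by
  have hanti : Antitone fun k ↦ f^[k] b := hmono.antitone_iterate_of_map_le hb
  have hlower (k : ℕ) : a ≤ f^[k] b :=
    (hmono.monotone_iterate_of_le_map ha k.zero_le).trans (hmono.iterate k hab)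
  obtain ⟨x, hx⟩ := exists_tendsto_of_antitone_of_bddBelow hanti
    ⟨a, Set.forall_mem_range.2 hlower⟩
  exact ⟨x, ⟨ge_of_tendsto' hx hlower, hanti.le_of_tendsto hx 0⟩, hx,
    isFixedPt_of_tendsto_iterate hx hcont.continuousAt⟩

end OrderedSpace

theorem monotone_mul_mul_star_add {R : Type*} [NonUnitalRing R] [PartialOrder R] [StarRing R]
    [StarOrderedRing R] (a m : R) : Monotone fun s ↦ a * s * star a + m :=
  fun _ _ h ↦ add_le_add_left (star_right_conjugate_le_conjugate h a) m

section LoewnerOrder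

open scoped ComplexOrder MatrixOrder

variable {𝕜 n : Type*} [RCLike 𝕜]

theorem isClosed_setOf_matrix_nonneg : IsClosed {A : Matrix n n 𝕜 | 0 ≤ A} := by
  simp only [nonneg_iff_posSemidef, PosSemidef, IsHermitian, Finsupp.sum, Set.ofPred_and,
    Set.ofPred_forall]
  exact (isClosed_eq (by fun_prop) continuous_id).inter
    (isClosed_iInter fun x ↦ isClosed_le continuous_const (by fun_prop))

instance loewnerOrder_orderClosedTopology : OrderClosedTopology (Matrix n n 𝕜) :=
  ⟨isClosed_le_of_isClosed_nonneg isClosed_setOf_matrix_nonneg⟩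

section Fintype

variable [Fintype n]

theorem trace_mul_nonneg {A B : Matrix n n 𝕜} (hA : 0 ≤ A) (hB : 0 ≤ B) :
    0 ≤ (A * B).trace := by
  classical
  obtain ⟨C, rfl⟩ := CStarAlgebra.nonneg_iff_eq_star_mul_self.mp hA
  rw [Matrix.mul_assoc, trace_mul_comm]
  exact (star_right_conjugate_nonneg hB C).posSemidef.trace_nonneg

theorem trace_mul_le_trace_mul_left {L A B : Matrix n n 𝕜} (hL : 0 ≤ L) (hAB : A ≤ B) :
    (L * A).trace ≤ (L * B).trace := by
  rw [← sub_nonneg, ← trace_sub, ← Matrix.mul_sub]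
  exact trace_mul_nonneg hL (sub_nonneg.2 hAB)

section Frobenius

open scoped Matrix.Norms.Frobenius

theorem frobenius_norm_sq_eq_re_trace {m : Type*} [Fintype m] (B : Matrix m n 𝕜) :
    ‖B‖ ^ 2 = RCLike.re (Bᴴ * B).trace := by
  rw [frobenius_norm_def, ← Real.sqrt_eq_rpow, Real.sq_sqrt (by positivity), Finset.sum_comm]
  simp only [trace, diag_apply, mul_apply, conjTranspose_apply, RCLike.star_def, RCLike.conj_mul,
    map_sum, ← RCLike.ofReal_pow, RCLike.ofReal_re, Real.rpow_two]

theorem frobenius_norm_le_re_trace {A : Matrix n n 𝕜} (hA : 0 ≤ A) :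
    ‖A‖ ≤ RCLike.re A.trace := by
  classical
  obtain ⟨B, rfl⟩ := CStarAlgebra.nonneg_iff_eq_star_mul_self.mp hA
  calc ‖Bᴴ * B‖ ≤ ‖Bᴴ‖ * ‖B‖ := frobenius_norm_mul _ _
    _ = ‖B‖ ^ 2 := by rw [frobenius_norm_conjTranspose, sq]
    _ = RCLike.re (Bᴴ * B).trace := frobenius_norm_sq_eq_re_trace B

theorem Icc_subset_frobenius_closedBall (A B : Matrix n n 𝕜) :
    Set.Icc A B ⊆ Metric.closedBall A (RCLike.re (B - A).trace) := by
  rintro X ⟨hAX, hXB⟩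
  have htrace : (X - A).trace ≤ (B - A).trace := by
    simpa [trace_sub] using (le_iff.1 hXB).trace_nonneg
  rw [mem_closedBall_iff_norm]
  exact (frobenius_norm_le_re_trace (sub_nonneg.2 hAX)).trans (RCLike.re_le_re htrace)

-- The Frobenius topology is the product topology only after unfolding instances, so the two are
-- identified in `loewnerOrder_compactIccSpace`, where the Frobenius instances are out of scope.
theorem isCompact_frobenius_closedBall {m : Type*} [Fintype m] (A : Matrix m n 𝕜) (r : ℝ) :
    IsCompact (Metric.closedBall A r) :=
  have := FiniteDimensional.proper 𝕜 (Matrix m n 𝕜)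
  isCompact_closedBall A r

end Frobenius

end Fintype

instance loewnerOrder_compactIccSpace [Finite n] : CompactIccSpace (Matrix n n 𝕜) where
  isCompact_Icc {A B} :=
    have := Fintype.ofFinite n
    (isCompact_frobenius_closedBall A _).of_isClosed_subset isClosed_Icc
      (Icc_subset_frobenius_closedBall A B)

theorem stmt9_general [Fintype n] {H : Matrix n n 𝕜 → Matrix n n 𝕜} (hmono : Monotone H)
    (hcont : Continuous H) (hH0 : 0 ≤ H 0) {S₀ : Matrix n n 𝕜} (hS₀ : 0 ≤ S₀) (hdec : H S₀ ≤ S₀) :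
    (∀ k, 0 ≤ H^[k] S₀ ∧ H^[k + 1] S₀ ≤ H^[k] S₀) ∧
    ∃ Sbar : Matrix n n 𝕜,
      Tendsto (fun k ↦ H^[k] S₀) atTop (nhds Sbar) ∧
      H Sbar = Sbar ∧ 0 ≤ Sbar ∧ Sbar ≤ S₀ ∧
      ∀ Λ : Matrix n n 𝕜, 0 ≤ Λ → (Λ * Sbar).trace ≤ (Λ * S₀).trace := by
  have hanti : Antitone fun k ↦ H^[k] S₀ := hmono.antitone_iterate_of_map_le hdec
  obtain ⟨Sbar, ⟨hSbar, hSbar_le⟩, hlim, hfix⟩ :=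
    exists_tendsto_iterate_isFixedPt hmono hcont hH0 hdec hS₀
  exact ⟨fun k ↦ ⟨hSbar.trans (hanti.le_of_tendsto hlim k), hanti k.le_succ⟩, Sbar, hlim, hfix,
    hSbar, hSbar_le, fun _ hΛ ↦ trace_mul_le_trace_mul_left hΛ hSbar_le⟩

end LoewnerOrder

theorem stmt9 {d : ℕ} (A₀ M : Matrix (Fin d) (Fin d) ℝ) (hM : M.PosSemidef)
    (H : Matrix (Fin d) (Fin d) ℝ → Matrix (Fin d) (Fin d) ℝ)
    (hH : ∀ S, H S = A₀ * S * A₀ᵀ + M)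
    (S₀ : Matrix (Fin d) (Fin d) ℝ) (hS₀ : S₀.PosSemidef)
    (hdec : (S₀ - H S₀).PosSemidef) :
    -- the iterates form a nonincreasing chain of PSD matrices below `S₀`
    (∀ k, (H^[k] S₀).PosSemidef ∧ (H^[k] S₀ - H^[k + 1] S₀).PosSemidef) ∧
    -- the iterates converge to a fixed point `S̄` with `0 ⪯ S̄ ⪯ S₀`
    ∃ Sbar : Matrix (Fin d) (Fin d) ℝ,
      Tendsto (fun k => H^[k] S₀) atTop (nhds Sbar) ∧
      H Sbar = Sbar ∧ Sbar.PosSemidef ∧ (S₀ - Sbar).PosSemidef ∧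
      -- consequently `Tr(Λ·S̄) ≤ Tr(Λ·S₀)` for every symmetric `Λ ⪰ 0`
      ∀ Λ : Matrix (Fin d) (Fin d) ℝ, Λ.PosSemidef →
        (Λ * Sbar).trace ≤ (Λ * S₀).trace := by
  obtain rfl : H = fun S ↦ A₀ * S * star A₀ + M := funext hH
  open scoped MatrixOrder in
  simpa only [le_iff, sub_zero] using stmt9_general (monotone_mul_mul_star_add A₀ M)
    (by fun_prop) (by simpa using hM.nonneg) hS₀.nonneg hdec
end
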